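/- (Lemma 2, t = 1 case, expected-adjacency form.) Fix n ∈ ℕ and densities p > q ≥ 0 with p > 0. For each divisor k of n, consider the Stochastic Block Model expected adjacency matrix on n nodes with k equal blocks of size s = n/k, and let R_intra(k) be the common Autocovariance value of intra-block pairs at walk length t = 1. Then R_intra(k) = (p − q)(k − 1) / (n²·(k·q + p − q)), and R_intra is strictly monotonically increasing in the number of blocks: for divisors k₁ < k₂ of n (with k₁ ≥ 1), R_intra(k₁) < R_intra(k₂). -/

import Mathlib

open Matrix BigOperators

/-!
At walk length `t = 1` the degree matrix cancels, so the Autocovariance of an intra-block pair is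
`p / vol - d² / vol²`. Every node has degree `d = s (k q + p - q)`, and with `vol = n d` and
`n = k s` this is `(p - q) / n²` times `(k - 1) / (k q + p - q)`, a Möbius transformation of `k`
whose determinant `p` is positive.
-/

section Autocovariance

variable {V K : Type*} [Fintype V] [Field K]

/-- The degrees of the nodes of a weighted graph, as the row sums of its adjacency matrix `A`. -/
def weightedDegree (A : Matrix V V K) (i : V) : K := ∑ j, A i j

/-- The total degree of a weighted graph with adjacency matrix `A`, by which its Autocovariance
is normalised. -/
def weightedVolume (A : Matrix V V K) : K := ∑ i, weightedDegree A i

theorem weightedVolume_of_weightedDegree_eq {A : Matrix V V K} {d : K}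
    (hA : ∀ i, weightedDegree A i = d) : weightedVolume A = Fintype.card V * d := by
  simp [weightedVolume, hA]

variable [DecidableEq V]

/-- The Autocovariance matrix `(D / vol) (D⁻¹ A) ^ t - d dᵀ / vol²` of a weighted graph for walks
of length `t`. The inverses are meaningful only if no degree vanishes and `vol ≠ 0`. -/
noncomputable def autocovariance (A : Matrix V V K) (t : ℕ) : Matrix V V K :=
  (weightedVolume A)⁻¹ •
      (diagonal (weightedDegree A) * ((diagonal (weightedDegree A))⁻¹ * A) ^ t) -
    (weightedVolume A ^ 2)⁻¹ • vecMulVec (weightedDegree A) (weightedDegree A)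

theorem autocovariance_one {A : Matrix V V K} (hA : ∀ i, weightedDegree A i ≠ 0) :
    autocovariance A 1 = (weightedVolume A)⁻¹ • A -
      (weightedVolume A ^ 2)⁻¹ • vecMulVec (weightedDegree A) (weightedDegree A) := by
  have hdet : IsUnit (diagonal (weightedDegree A)).det := by
    rw [det_diagonal]
    exact (Finset.prod_ne_zero_iff.mpr fun i _ => hA i).isUnit
  rw [autocovariance, pow_one, mul_nonsing_inv_cancel_left _ _ hdet]

theorem autocovariance_of_weightedDegree_eq {A : Matrix V V K} {d : K}
    (hA : ∀ i, weightedDegree A i = d) (t : ℕ) :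
    autocovariance A t =
      (Fintype.card V * d)⁻¹ • (d • (1 : Matrix V V K) * ((d • (1 : Matrix V V K))⁻¹ * A) ^ t) -
        ((Fintype.card V * d) ^ 2)⁻¹ • Matrix.of (fun _ _ : V => d * d) := by
  have hD : diagonal (weightedDegree A) = d • (1 : Matrix V V K) := by
    rw [smul_one_eq_diagonal, funext hA]
  have hdd : vecMulVec (weightedDegree A) (weightedDegree A) = Matrix.of fun _ _ => d * d := by
    rw [funext hA]
    rfl
  rw [autocovariance, hD, hdd, weightedVolume_of_weightedDegree_eq hA]

theorem autocovariance_one_apply_of_weightedDegree_eq {A : Matrix V V K} {d : K}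
    (hA : ∀ i, weightedDegree A i = d) (hd : d ≠ 0) (i j : V) :
    autocovariance A 1 i j = A i j / (Fintype.card V * d) - 1 / (Fintype.card V : K) ^ 2 := by
  rw [autocovariance_one fun i => (hA i).trans_ne hd, weightedVolume_of_weightedDegree_eq hA]
  simp only [Matrix.sub_apply, Matrix.smul_apply, vecMulVec_apply, hA, smul_eq_mul]
  field_simp

end Autocovariance

section StochasticBlockModel

variable {K : Type*} [Field K] (ι κ : Type*) [DecidableEq ι]

/-- The expected adjacency matrix of the Stochastic Block Model with blocks indexed by `ι`, the
nodes of each block indexed by `κ`, intra-block density `p` and inter-block density `q`. -/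
def sbmAdjacency (p q : K) : Matrix (ι × κ) (ι × κ) K :=
  q • (Matrix.of fun _ _ => (1 : K)) +
    (p - q) • (Matrix.of fun u v => if u.1 = v.1 then (1 : K) else 0)

variable {ι κ}

theorem sbmAdjacency_apply_of_fst_eq (p q : K) {u v : ι × κ} (huv : u.1 = v.1) :
    sbmAdjacency ι κ p q u v = p := by
  simp [sbmAdjacency, huv]

variable [Fintype ι] [Fintype κ]

theorem weightedDegree_sbmAdjacency (p q : K) (u : ι × κ) :
    weightedDegree (sbmAdjacency ι κ p q) u =
      Fintype.card κ * p + ((Fintype.card ι : K) - 1) * Fintype.card κ * q := by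
  have hblock : ∑ v : ι × κ, (if u.1 = v.1 then (1 : K) else 0) = Fintype.card κ := by
    rw [Fintype.sum_prod_type_right]
    simp
  calc weightedDegree (sbmAdjacency ι κ p q) u
    _ = ∑ v : ι × κ, (q + (p - q) * if u.1 = v.1 then (1 : K) else 0) := by
      simp [weightedDegree, sbmAdjacency]
    _ = Fintype.card (ι × κ) * q + (p - q) * Fintype.card κ := by
      simp only [Finset.sum_add_distrib, ← Finset.mul_sum, hblock, Finset.sum_const,
        Finset.card_univ, nsmul_eq_mul]
    _ = Fintype.card κ * p + ((Fintype.card ι : K) - 1) * Fintype.card κ * q := by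
      rw [Fintype.card_prod, Nat.cast_mul]
      ring

theorem autocovariance_sbmAdjacency_one_apply_of_fst_eq [CharZero K] [DecidableEq κ] {p q : K}
    (hpq : (Fintype.card ι : K) * q + p - q ≠ 0) {u v : ι × κ} (huv : u.1 = v.1) :
    autocovariance (sbmAdjacency ι κ p q) 1 u v =
      (p - q) * ((Fintype.card ι : K) - 1) /
        ((Fintype.card (ι × κ) : K) ^ 2 * ((Fintype.card ι : K) * q + p - q)) := by
  have : Nonempty ι := ⟨u.1⟩
  have : Nonempty κ := ⟨u.2⟩
  have hk : (Fintype.card ι : K) ≠ 0 := Nat.cast_ne_zero.mpr Fintype.card_ne_zero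
  have hs : (Fintype.card κ : K) ≠ 0 := Nat.cast_ne_zero.mpr Fintype.card_ne_zero
  have hdeg (w : ι × κ) : weightedDegree (sbmAdjacency ι κ p q) w =
      Fintype.card κ * ((Fintype.card ι : K) * q + p - q) := by
    rw [weightedDegree_sbmAdjacency]
    ring
  rw [autocovariance_one_apply_of_weightedDegree_eq hdeg (mul_ne_zero hs hpq),
    sbmAdjacency_apply_of_fst_eq p q huv, Fintype.card_prod, Nat.cast_mul]
  field_simp
  ring

end StochasticBlockModel

section Monotonicity

variable {K : Type*} [Field K] [LinearOrder K] [IsStrictOrderedRing K] {p q : K}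

theorem mul_add_sub_pos_of_one_le (hq : 0 ≤ q) (hp : 0 < p) {x : K} (hx : 1 ≤ x) :
    0 < x * q + p - q := by
  have : q ≤ x * q := le_mul_of_one_le_left hq hx
  linarith

theorem strictMonoOn_sub_one_div_mul_add_sub (hp : 0 < p) (q : K) :
    StrictMonoOn (fun x => (x - 1) / (x * q + p - q)) {x | 0 < x * q + p - q} := by
  intro x hx y hy hxy
  have hcross : (y - 1) * (x * q + p - q) - (x - 1) * (y * q + p - q) = (y - x) * p := by ring
  rw [div_lt_div_iff₀ hx hy, ← sub_pos, hcross]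
  exact mul_pos (sub_pos.mpr hxy) hp

end Monotonicity

/-- Lemma 2, t = 1 case, expected-adjacency form: Fix `n` and densities
`p > q ≥ 0`, `p > 0`. For each divisor `k` of `n`, the SBM expected adjacency matrix on `n`
nodes with `k` equal blocks of size `s = n / k` has intra-block Autocovariance value at walk
length `t = 1` equal to `(p − q)(k − 1) / (n² (k q + p − q))`, and this value strictly
increases with the number of blocks: for divisors `k₁ < k₂` of `n` (with `k₁ ≥ 1`), the
intra-block value for `k₁` blocks is strictly smaller than the one for `k₂` blocks. -/
theorem sbm_intra_autocovariance_increasing_in_blocks (n : ℕ) (hn : 0 < n)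
    (p q : ℝ) (hq : 0 ≤ q) (hpq : q < p) (hp : 0 < p)
    (k₁ k₂ : ℕ) (hk₁ : 1 ≤ k₁) (hk₁₂ : k₁ < k₂) (hdvd₁ : k₁ ∣ n) (hdvd₂ : k₂ ∣ n)
    (s₁ s₂ : ℕ) (hs₁ : s₁ = n / k₁) (hs₂ : s₂ = n / k₂)
    (A₁ : Matrix (Fin k₁ × Fin s₁) (Fin k₁ × Fin s₁) ℝ)
    (hA₁ : A₁ = q • (Matrix.of fun _ _ => (1 : ℝ)) +
      (p - q) • (Matrix.of fun u v => if u.1 = v.1 then (1 : ℝ) else 0))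
    (A₂ : Matrix (Fin k₂ × Fin s₂) (Fin k₂ × Fin s₂) ℝ)
    (hA₂ : A₂ = q • (Matrix.of fun _ _ => (1 : ℝ)) +
      (p - q) • (Matrix.of fun u v => if u.1 = v.1 then (1 : ℝ) else 0))
    (d₁ d₂ : ℝ)
    (hd₁ : d₁ = (s₁ : ℝ) * p + ((k₁ : ℝ) - 1) * (s₁ : ℝ) * q)
    (hd₂ : d₂ = (s₂ : ℝ) * p + ((k₂ : ℝ) - 1) * (s₂ : ℝ) * q)
    (D₁ : Matrix (Fin k₁ × Fin s₁) (Fin k₁ × Fin s₁) ℝ) (hD₁ : D₁ = d₁ • 1)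
    (D₂ : Matrix (Fin k₂ × Fin s₂) (Fin k₂ × Fin s₂) ℝ) (hD₂ : D₂ = d₂ • 1)
    (vol₁ vol₂ : ℝ) (hvol₁ : vol₁ = (n : ℝ) * d₁) (hvol₂ : vol₂ = (n : ℝ) * d₂)
    (R₁ : Matrix (Fin k₁ × Fin s₁) (Fin k₁ × Fin s₁) ℝ)
    (hR₁ : R₁ = vol₁⁻¹ • (D₁ * (D₁⁻¹ * A₁) ^ 1) -
      (vol₁ ^ 2)⁻¹ • Matrix.of (fun _ _ : Fin k₁ × Fin s₁ => d₁ * d₁))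
    (R₂ : Matrix (Fin k₂ × Fin s₂) (Fin k₂ × Fin s₂) ℝ)
    (hR₂ : R₂ = vol₂⁻¹ • (D₂ * (D₂⁻¹ * A₂) ^ 1) -
      (vol₂ ^ 2)⁻¹ • Matrix.of (fun _ _ : Fin k₂ × Fin s₂ => d₂ * d₂)) :
    (∀ u v : Fin k₁ × Fin s₁, u.1 = v.1 →
      R₁ u v = (p - q) * ((k₁ : ℝ) - 1) / ((n : ℝ) ^ 2 * ((k₁ : ℝ) * q + p - q))) ∧
    (∀ u v : Fin k₂ × Fin s₂, u.1 = v.1 →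
      R₂ u v = (p - q) * ((k₂ : ℝ) - 1) / ((n : ℝ) ^ 2 * ((k₂ : ℝ) * q + p - q))) ∧
    (∀ (u v : Fin k₁ × Fin s₁) (u' v' : Fin k₂ × Fin s₂),
      u.1 = v.1 → u'.1 = v'.1 → R₁ u v < R₂ u' v') := by
  have hks₁ : k₁ * s₁ = n := hs₁ ▸ Nat.mul_div_cancel' hdvd₁
  have hks₂ : k₂ * s₂ = n := hs₂ ▸ Nat.mul_div_cancel' hdvd₂
  have hden₁ := mul_add_sub_pos_of_one_le hq hp (Nat.one_le_cast.mpr hk₁)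
  have hden₂ := mul_add_sub_pos_of_one_le hq hp (Nat.one_le_cast.mpr (hk₁.trans hk₁₂.le))
  have hR₁_eq : R₁ = autocovariance (sbmAdjacency (Fin k₁) (Fin s₁) p q) 1 := by
    rw [autocovariance_of_weightedDegree_eq (weightedDegree_sbmAdjacency p q)]
    simp only [Fintype.card_prod, Fintype.card_fin, hks₁, hR₁, hA₁, hD₁, hvol₁, hd₁, sbmAdjacency]
  have hR₂_eq : R₂ = autocovariance (sbmAdjacency (Fin k₂) (Fin s₂) p q) 1 := by
    rw [autocovariance_of_weightedDegree_eq (weightedDegree_sbmAdjacency p q)]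
    simp only [Fintype.card_prod, Fintype.card_fin, hks₂, hR₂, hA₂, hD₂, hvol₂, hd₂, sbmAdjacency]
  have intra₁ (u v : Fin k₁ × Fin s₁) (huv : u.1 = v.1) :
      R₁ u v = (p - q) * ((k₁ : ℝ) - 1) / ((n : ℝ) ^ 2 * ((k₁ : ℝ) * q + p - q)) := by
    simpa only [hR₁_eq, Fintype.card_prod, Fintype.card_fin, hks₁] using
      autocovariance_sbmAdjacency_one_apply_of_fst_eq (by simpa using hden₁.ne') huv
  have intra₂ (u v : Fin k₂ × Fin s₂) (huv : u.1 = v.1) :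
      R₂ u v = (p - q) * ((k₂ : ℝ) - 1) / ((n : ℝ) ^ 2 * ((k₂ : ℝ) * q + p - q)) := by
    simpa only [hR₂_eq, Fintype.card_prod, Fintype.card_fin, hks₂] using
      autocovariance_sbmAdjacency_one_apply_of_fst_eq (by simpa using hden₂.ne') huv
  refine ⟨intra₁, intra₂, fun u v u' v' huv huv' => ?_⟩
  rw [intra₁ u v huv, intra₂ u' v' huv', mul_div_mul_comm, mul_div_mul_comm]
  have hscale : 0 < (p - q) / (n : ℝ) ^ 2 := div_pos (sub_pos.mpr hpq) (by positivity)
  exact mul_lt_mul_of_pos_left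
    (strictMonoOn_sub_one_div_mul_add_sub hp q hden₁ hden₂ (mod_cast hk₁₂)) hscale
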